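/- For every k ≥ 1, every c ∈ {1,…,k}, and every n ≥ 1, the number t_{n,c} of isomorphism classes of injectively k-colored rooted trees with n vertices and root colored c equals (1/(kn−n+1))·C(kn−n+1, n), which is the Fuss–Catalan number A_n(k−1, 1). -/

import Mathlib

/-!
Read off, for each vertex of an injectively colored tree, the word of colors along the path from
the vertex to the root. Since siblings have distinct colors, distinct vertices get distinct words
(`IsCode.injective`), so the set of words is a complete isomorphism invariant
(`IsCode.image_eq_of_iso`, `IsCode.iso_of_image_eq`). As a vertex also differs in color from its
parent, the sets that occur are exactly the nonempty finite sets `S` of words in which every word is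
either `[c]` or a child `a :: w` of some `w ∈ S`, with `a` different from the first letter of `w`
(`IsCode.grows`, `exists_tree_of_grows`).

To count them, allow a finite antichain `W` of possible roots (slots) in place of `{[c]}`.
For a slot `w ∈ W`, either `w ∉ S`, and `w` can be discarded, or `w ∈ S`, and `S.erase w` grows out of
`W` with `w` replaced by its `k - 1` children. Hence the number `f(n, r)` of sets of size `n` over
`r` slots satisfies `f(n+1, r+1) = f(n+1, r) + f(n, r + k - 1)` (`encard_grows`), which is the
recursion of the Fuss–Catalan numbers `A_n(k-1, r)` (`forestCount_mul`); the theorem is `r = 1`.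
-/

/- An `m`-rooted forest on vertex set `Fin n` with an injective `k`-coloring;
`m = 1` gives rooted trees. -/
structure CForest (k m n : ℕ) where
  adj : Fin n → Fin n → Prop
  root : Fin m → Fin n
  color : Fin n → Fin k
  root_inj : Function.Injective root
  path_unique : ∀ v : Fin n, ∃! p : List (Fin n),
    List.Chain' adj p ∧ (∃ j : Fin m, p.head? = some (root j)) ∧ p.getLast? = some v
  color_inj : ∀ v : Fin n, Set.InjOn color ({v} ∪ {w | adj v w})

def CForest.Iso {k m n : ℕ} (F G : CForest k m n) : Prop :=
  ∃ e : Fin n ≃ Fin n, (∀ v w : Fin n, F.adj v w ↔ G.adj (e v) (e w)) ∧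
    (∀ j : Fin m, e (F.root j) = G.root j) ∧ (∀ v : Fin n, G.color (e v) = F.color v)

/- `t_{n,c}`: the number of isomorphism classes of injectively `k`-colored rooted
trees with `n` vertices and root colored `c`. -/
noncomputable def treeCountN (k n : ℕ) (c : Fin k) : ℕ :=
  Nat.card (Quot (fun F G : {F : CForest k 1 n // ∀ j : Fin 1, F.color (F.root j) = c} =>
    CForest.Iso F.1 G.1))

/- Fuss–Catalan number `A_n(p,r) = (r/(np+r))·C(np+r,n)`. -/
def fussCat (n p r : ℕ) : ℚ := ((r : ℚ) / ((n * p + r : ℕ) : ℚ)) * ((n * p + r).choose n : ℚ)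

/-! ### The Fuss–Catalan recursion -/

/-- The number of ordered sequences of `r` possibly empty `p`-ary trees with `n` nodes in total:
the first tree is either empty, or its root can be removed and replaced by its `p` subtrees. -/
def forestCount (p : ℕ) : ℕ → ℕ → ℕ
  | 0, _ => 1
  | _ + 1, 0 => 0
  | n + 1, r + 1 => forestCount p (n + 1) r + forestCount p n (r + p)
termination_by n r => (n, r)

/-- `forestCount p n r` is the Fuss–Catalan number `A_n(p,r)`. The denominator is cleared, so that
the identity also covers `n * p + r = 0` and passes through the induction. -/
theorem forestCount_mul (p n r : ℕ) :
    (forestCount p n r : ℚ) * ((n * p + r : ℕ) : ℚ) = r * ((n * p + r).choose n : ℚ) := by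
  induction n, r using forestCount.induct (p := p) with
  | case1 r => simp [forestCount]
  | case2 n => simp [forestCount]
  | case3 n r ih₁ ih₂ =>
    rw [forestCount]
    have e : n * p + (r + p) = (n + 1) * p + r := by ring
    rw [e] at ih₂
    obtain ⟨M, hM⟩ : ∃ M, M = (n + 1) * p + r := ⟨_, rfl⟩
    rw [← hM] at ih₁ ih₂
    have e₂ : n.succ * p + r.succ = M + 1 := by rw [hM]; rfl
    rw [e₂, Nat.succ_eq_add_one n, Nat.succ_eq_add_one r]
    -- `M` is cancelled below; `M = 0` only happens for `r = p = 0`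
    rcases Nat.eq_zero_or_pos M with h0 | hpos
    · have hr : r = 0 := by omega
      have hp : p = 0 := by
        rcases Nat.eq_zero_or_pos p with h | h
        · exact h
        · have : 0 < (n + 1) * p := by positivity
          omega
      subst hr hp h0
      cases n with
      | zero => simp [forestCount]
      | succ n => simp [forestCount, Nat.choose_eq_zero_of_lt (show 1 < n + 1 + 1 by omega)]
    · have hMq : (M : ℚ) ≠ 0 := by positivity
      have h1 := Nat.add_one_mul_choose_eq M n
      have h2 : (M + 1).choose (n + 1) = M.choose n + M.choose (n + 1) :=
        Nat.choose_succ_succ M n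
      have h1q : ((M : ℚ) + 1) * M.choose n = (M.choose n + M.choose (n + 1)) * (n + 1) := by
        rw [h2] at h1; exact_mod_cast h1
      have hMc : (M : ℚ) = (n + 1) * p + r := by exact_mod_cast hM
      rw [h2]
      have hn : ((n : ℚ) + 1) ≠ 0 := by positivity
      apply mul_left_cancel₀ hMq
      apply mul_left_cancel₀ hn
      push_cast at ih₁ ih₂ ⊢
      generalize (M.choose n : ℚ) = x at *
      generalize (M.choose (n + 1) : ℚ) = y at *
      have key : ((n : ℚ) + 1) * (r * y + (r + p) * x) = M * (r + 1) * x := by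
        linear_combination (-(r : ℚ)) * h1q - x * hMc
      linear_combination ((n : ℚ) + 1) * (M + 1) * (ih₁ + ih₂) + (M + 1) * key + M * (r + 1) * h1q

/-! ### Counting sets of words -/

/-- The words `a :: w` whose first letter `a` differs from the first letter of `w`. A word lists the
colors along a path *towards* the root, so that the parent of a vertex is the tail of its word. -/
def children {k : ℕ} (w : List (Fin k)) : Finset (List (Fin k)) :=
  (Finset.univ.filter fun a => w.head? ≠ some a).image fun a => a :: w

theorem mem_children {k : ℕ} {w s : List (Fin k)} :
    s ∈ children w ↔ ∃ a, w.head? ≠ some a ∧ s = a :: w := by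
  simp [children, eq_comm]

theorem card_children {k : ℕ} {w : List (Fin k)} (hw : w ≠ []) :
    (children w).card = k - 1 := by
  rw [children, Finset.card_image_of_injective _ (fun a b h => (List.cons.inj h).1)]
  obtain ⟨b, t, rfl⟩ := List.exists_cons_of_ne_nil hw
  simp [Finset.filter_ne]

/-- `S` grows out of the set of slots `W`: each word of `S` lies in `W` or is a child of a word of
`S`. For an antichain `W` under the suffix order, such an `S` is a forest whose roots fill some of
the slots. -/
def Grows {k : ℕ} (W S : Finset (List (Fin k))) : Prop :=
  ∀ s ∈ S, s ∈ W ∨ ∃ t ∈ S, s ∈ children t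

theorem Grows.exists_suffix {k : ℕ} {W S : Finset (List (Fin k))} (h : Grows W S)
    (s : List (Fin k)) (hs : s ∈ S) : ∃ w ∈ W, w ∈ S ∧ w <:+ s := by
  induction s with
  | nil =>
    rcases h _ hs with h | ⟨t, _, ht⟩
    · exact ⟨_, h, hs, List.suffix_rfl⟩
    · obtain ⟨a, _, h⟩ := mem_children.1 ht
      simp at h
  | cons b s ih =>
    rcases h _ hs with h | ⟨t, htS, ht⟩
    · exact ⟨_, h, hs, List.suffix_rfl⟩
    · obtain ⟨a, _, h⟩ := mem_children.1 ht
      obtain ⟨-, rfl⟩ := List.cons.inj h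
      obtain ⟨w, hw, hwS, hws⟩ := ih htS
      exact ⟨w, hw, hwS, hws.trans (List.suffix_cons _ _)⟩

/-- Leaving the slot `w` empty amounts to discarding it. -/
theorem grows_erase_and_notMem_iff {k : ℕ} {W S : Finset (List (Fin k))}
    (hW : IsAntichain (· <:+ ·) (W : Set (List (Fin k)))) {w : List (Fin k)} (hw : w ∈ W) :
    Grows W S ∧ w ∉ S ↔ Grows (W.erase w) S := by
  constructor
  · rintro ⟨h, hwS⟩ s hs
    rcases h s hs with h' | h'
    · exact Or.inl (Finset.mem_erase.2 ⟨fun e => hwS (e ▸ hs), h'⟩)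
    · exact Or.inr h'
  · intro h
    refine ⟨fun s hs => (h s hs).imp_left Finset.mem_of_mem_erase, fun hwS => ?_⟩
    obtain ⟨x, hx, -, hxw⟩ := h.exists_suffix w hwS
    exact hW (Finset.mem_of_mem_erase hx) hw (Finset.ne_of_mem_erase hx) hxw

theorem disjoint_erase_children {k : ℕ} {W : Finset (List (Fin k))}
    (hW : IsAntichain (· <:+ ·) (W : Set (List (Fin k)))) {w : List (Fin k)} (hw : w ∈ W) :
    Disjoint (W.erase w) (children w) := by
  rw [Finset.disjoint_left]
  intro x hx hxc
  obtain ⟨a, _, rfl⟩ := mem_children.1 hxc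
  exact hW hw (Finset.mem_of_mem_erase hx) (Finset.ne_of_mem_erase hx).symm (List.suffix_cons _ _)

theorem isAntichain_expand {k : ℕ} {W : Finset (List (Fin k))}
    (hW : IsAntichain (· <:+ ·) (W : Set (List (Fin k)))) {w : List (Fin k)} (hw : w ∈ W) :
    IsAntichain (· <:+ ·) ((W.erase w ∪ children w : Finset _) : Set (List (Fin k))) := by
  intro x hx y hy hxy hs
  simp only [Finset.coe_union, Set.mem_union, Finset.mem_coe, Finset.mem_erase,
    mem_children] at hx hy
  rcases hx with ⟨hxw, hx⟩ | ⟨a, _, rfl⟩ <;> rcases hy with ⟨hyw, hy⟩ | ⟨b, _, rfl⟩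
  · exact hW hx hy hxy hs
  · rcases List.suffix_cons_iff.1 hs with h | h
    · exact hxy h
    · exact hW hx hw hxw h
  · exact hW hw hy (Ne.symm hyw) ((List.suffix_cons _ _).trans hs)
  · exact hxy (hs.eq_of_length (by simp))

theorem notMem_of_grows_expand {k : ℕ} {W S : Finset (List (Fin k))}
    (hW : IsAntichain (· <:+ ·) (W : Set (List (Fin k)))) {w : List (Fin k)} (hw : w ∈ W)
    (h : Grows (W.erase w ∪ children w) S) : w ∉ S := by
  intro hwS
  obtain ⟨x, hx, -, hxw⟩ := h.exists_suffix w hwS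
  rcases Finset.mem_union.1 hx with hx | hx
  · exact hW (Finset.mem_of_mem_erase hx) hw (Finset.ne_of_mem_erase hx) hxw
  · obtain ⟨a, _, rfl⟩ := mem_children.1 hx
    simpa using hxw.length_le

/-- Deleting a root `w` turns its `children` into new slots. -/
theorem Grows.erase {k : ℕ} {W S : Finset (List (Fin k))} {w : List (Fin k)} (h : Grows W S) :
    Grows (W.erase w ∪ children w) (S.erase w) := by
  intro s hs
  obtain ⟨hsw, hs⟩ := Finset.mem_erase.1 hs
  rcases h s hs with h' | ⟨t, ht, hst⟩
  · exact Or.inl (Finset.mem_union_left _ (Finset.mem_erase.2 ⟨hsw, h'⟩))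
  · by_cases htw : t = w
    · exact Or.inl (Finset.mem_union_right _ (htw ▸ hst))
    · exact Or.inr ⟨t, Finset.mem_erase.2 ⟨htw, ht⟩, hst⟩

/-- Converse of `Grows.erase`: adding the root `w` turns its `children` back into non-slots. -/
theorem Grows.insert {k : ℕ} {W S : Finset (List (Fin k))} {w : List (Fin k)} (hw : w ∈ W)
    (h : Grows (W.erase w ∪ children w) S) : Grows W (insert w S) := by
  intro s hs
  rcases Finset.mem_insert.1 hs with rfl | hs
  · exact Or.inl hw
  · rcases h s hs with h' | ⟨t, ht, hst⟩
    · rcases Finset.mem_union.1 h' with h' | h'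
      · exact Or.inl (Finset.mem_of_mem_erase h')
      · exact Or.inr ⟨w, Finset.mem_insert_self _ _, h'⟩
    · exact Or.inr ⟨t, Finset.mem_insert_of_mem ht, hst⟩

/-- The sets growing out of `W` satisfy the recursion of `forestCount`, according to whether a
chosen slot `w ∈ W` is empty or filled. Using `encard` gives finiteness along with the count. -/
theorem encard_grows {k : ℕ} (n r : ℕ) :
    ∀ W : Finset (List (Fin k)), W.card = r → [] ∉ W →
      IsAntichain (· <:+ ·) (W : Set (List (Fin k))) →
      {S : Finset (List (Fin k)) | Grows W S ∧ S.card = n}.encard = forestCount (k - 1) n r := by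
  induction n, r using forestCount.induct (p := k - 1) with
  | case1 r =>
    intro W _ _ _
    have : {S : Finset (List (Fin k)) | Grows W S ∧ S.card = 0} = {∅} := by
      ext S
      simp only [Set.mem_ofPred_eq, Finset.card_eq_zero, Set.mem_singleton_iff]
      exact ⟨fun h => h.2, fun h => ⟨by simp [h, Grows], h⟩⟩
    rw [this, Set.encard_singleton, forestCount, Nat.cast_one]
  | case2 n =>
    intro W hW _ _
    obtain rfl := Finset.card_eq_zero.1 hW
    have : {S : Finset (List (Fin k)) | Grows ∅ S ∧ S.card = n.succ} = ∅ := by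
      ext S
      simp only [Set.mem_ofPred_eq, Set.mem_empty_iff_false, iff_false, not_and]
      intro h hS
      obtain ⟨s, hs⟩ := Finset.card_pos.1 (by omega : 0 < S.card)
      obtain ⟨w, hw, -⟩ := h.exists_suffix s hs
      simp at hw
    rw [this, Set.encard_empty, forestCount, Nat.cast_zero]
  | case3 n r ih₁ ih₂ =>
    intro W hW hnil hanti
    obtain ⟨w, hw⟩ := Finset.card_pos.1 (by omega : 0 < W.card)
    have hwnil : w ≠ [] := fun e => hnil (e ▸ hw)
    have hcard : (W.erase w).card = r := by rw [Finset.card_erase_of_mem hw]; omega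
    specialize ih₁ (W.erase w) hcard (fun h => hnil (Finset.mem_of_mem_erase h))
      (hanti.subset (by simp))
    specialize ih₂ (W.erase w ∪ children w)
      (by rw [Finset.card_union_of_disjoint (disjoint_erase_children hanti hw), hcard,
            card_children hwnil])
      (by simp [mem_children, hnil]) (isAntichain_expand hanti hw)
    have split : {S : Finset (List (Fin k)) | Grows W S ∧ S.card = n.succ} =
        {S | Grows (W.erase w) S ∧ S.card = n + 1} ∪
          insert w '' {S | Grows (W.erase w ∪ children w) S ∧ S.card = n} := by
      ext S
      simp only [Set.mem_ofPred_eq, Set.mem_union, Set.mem_image,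
        ← grows_erase_and_notMem_iff hanti hw]
      constructor
      · rintro ⟨h, hS⟩
        by_cases hwS : w ∈ S
        · exact Or.inr ⟨S.erase w, ⟨h.erase, by rw [Finset.card_erase_of_mem hwS]; omega⟩,
            Finset.insert_erase hwS⟩
        · exact Or.inl ⟨⟨h, hwS⟩, hS⟩
      · rintro (⟨⟨h, -⟩, hS⟩ | ⟨S, ⟨h, hS⟩, rfl⟩)
        · exact ⟨h, hS⟩
        · exact ⟨h.insert hw, by
            rw [Finset.card_insert_of_notMem (notMem_of_grows_expand hanti hw h), hS]⟩
    have disj : Disjoint {S : Finset (List (Fin k)) | Grows (W.erase w) S ∧ S.card = n + 1}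
        (insert w '' {S | Grows (W.erase w ∪ children w) S ∧ S.card = n}) := by
      rw [Set.disjoint_left]
      rintro _ ⟨h, -⟩ ⟨S, -, rfl⟩
      exact ((grows_erase_and_notMem_iff hanti hw).2 h).2 (Finset.mem_insert_self _ _)
    have inj : Set.InjOn (insert w)
        {S : Finset (List (Fin k)) | Grows (W.erase w ∪ children w) S ∧ S.card = n} := by
      rintro S ⟨hS, -⟩ T ⟨hT, -⟩ e
      rw [← Finset.erase_insert (notMem_of_grows_expand hanti hw hS), e,
        Finset.erase_insert (notMem_of_grows_expand hanti hw hT)]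
    rw [split, Set.encard_union_eq disj, inj.encard_image, ih₁, ih₂, forestCount, Nat.cast_add]

/-! ### The words of a colored tree -/

/-- `code v` is the word of colors read along the path from `v` up to the root. -/
structure IsCode {k n : ℕ} (F : CForest k 1 n) (code : Fin n → List (Fin k)) : Prop where
  root : code (F.root 0) = [F.color (F.root 0)]
  step : ∀ u v, F.adj u v → code v = F.color v :: code u

/-- A graded relation in which parents are unique and every vertex other than the parentless `root`
has one is a rooted tree: each vertex is the end of a unique path from `root`. -/
theorem existsUnique_path {V : Type*} {adj : V → V → Prop} {root : V} (rank : V → ℕ)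
    (hrank : ∀ u v, adj u v → rank u < rank v) (hpar : ∀ u u' v, adj u v → adj u' v → u = u')
    (hroot : ∀ u, ¬ adj u root) (hex : ∀ v, v = root ∨ ∃ u, adj u v) (v : V) :
    ∃! p : List V, List.IsChain adj p ∧ p.head? = some root ∧ p.getLast? = some v := by
  induction hr : rank v using Nat.strong_induction_on generalizing v with
  | _ N ih =>
    subst hr
    rcases hex v with rfl | ⟨u, huv⟩
    · refine ⟨[v], by simp, ?_⟩
      rintro q ⟨hc, hh, hl⟩
      obtain ⟨q, rfl⟩ : ∃ q', q = q' ++ [v] := by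
        rw [List.getLast?_eq_some_iff] at hl; exact hl
      rcases List.eq_nil_or_concat q with rfl | ⟨q', x, rfl⟩
      · rfl
      · rw [List.isChain_append] at hc
        exact absurd (hc.2.2 x (by simp) v (by simp)) (hroot _)
    · obtain ⟨p, ⟨hc, hh, hl⟩, huniq⟩ := ih _ (hrank _ _ huv) u rfl
      refine ⟨p ++ [v], ⟨?_, ?_, by simp⟩, ?_⟩
      · rw [List.isChain_append]
        refine ⟨hc, by simp, ?_⟩
        intro x hx y hy
        rw [hl] at hx
        simp at hx hy
        subst hx hy
        exact huv
      · simp [List.head?_append, hh]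
      · rintro q ⟨hc', hh', hl'⟩
        obtain ⟨q, rfl⟩ : ∃ q', q = q' ++ [v] := by
          rw [List.getLast?_eq_some_iff] at hl'; exact hl'
        rcases List.eq_nil_or_concat q with rfl | ⟨q', x, rfl⟩
        · simp at hh'
          subst hh'
          exact absurd huv (hroot _)
        · rw [List.concat_eq_append] at hc' hh' ⊢
          rw [List.isChain_append] at hc'
          have hx := hpar _ _ _ (hc'.2.2 x (by simp) v (by simp)) huv
          subst hx
          rw [huniq (q' ++ [x]) ⟨hc'.1, by simpa using hh', by simp⟩]

theorem eq_root_or_exists_adj {k n : ℕ} (F : CForest k 1 n) (v : Fin n) :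
    v = F.root 0 ∨ ∃ u, F.adj u v := by
  obtain ⟨p, ⟨hc, ⟨j, hj⟩, hl⟩, -⟩ := F.path_unique v
  have hc : List.IsChain F.adj p := hc
  obtain rfl : j = 0 := Subsingleton.elim _ _
  obtain ⟨q, rfl⟩ : ∃ q', p = q' ++ [v] := by
    rw [List.getLast?_eq_some_iff] at hl; exact hl
  rcases List.eq_nil_or_concat q with rfl | ⟨q', x, rfl⟩
  · left; simpa using hj
  · rw [List.isChain_append] at hc
    exact Or.inr ⟨x, hc.2.2 x (by simp) v (by simp)⟩

theorem exists_isCode {k n : ℕ} (F : CForest k 1 n) : ∃ code, IsCode F code := by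
  choose path hpath huniq using F.path_unique
  refine ⟨fun v => ((path v).map F.color).reverse, ?_, ?_⟩
  · rw [← huniq (F.root 0) [F.root 0] ⟨List.IsChain.singleton _, ⟨0, by simp⟩, by simp⟩]
    simp
  · intro u v huv
    obtain ⟨hc, ⟨j, hj⟩, hl⟩ := hpath u
    rw [← huniq v (path u ++ [v]) ⟨?_, ⟨j, by simp [List.head?_append, hj]⟩, by simp⟩]
    · simp
    · refine List.isChain_append.2 ⟨hc, by simp, ?_⟩
      intro x hx y hy
      rw [hl] at hx
      simp at hx hy
      subst hx hy
      exact huv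

namespace IsCode

variable {k n : ℕ} {F G : CForest k 1 n} {code code' : Fin n → List (Fin k)}

theorem head? (h : IsCode F code) (v : Fin n) : (code v).head? = some (F.color v) := by
  rcases eq_root_or_exists_adj F v with rfl | ⟨u, huv⟩
  · simp [h.root]
  · simp [h.step u v huv]

theorem ne_nil (h : IsCode F code) (v : Fin n) : code v ≠ [] := by
  intro e
  simpa [e] using h.head? v

theorem not_adj_root (h : IsCode F code) (u : Fin n) : ¬ F.adj u (F.root 0) := by
  intro hu
  have := h.step _ _ hu
  rw [h.root] at this
  exact h.ne_nil u (List.cons.inj this).2.symm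

theorem color_ne (h : IsCode F code) {u v : Fin n} (huv : F.adj u v) :
    F.color u ≠ F.color v := by
  intro e
  have := F.color_inj u (by simp) (by simp [huv]) e
  subst this
  simpa using congrArg List.length (h.step u u huv)

theorem unique (h : IsCode F code) (h' : IsCode F code') : code = code' := by
  funext v
  induction hr : (code v).length using Nat.strong_induction_on generalizing v with
  | _ N ih =>
    subst hr
    rcases eq_root_or_exists_adj F v with rfl | ⟨u, huv⟩
    · rw [h.root, h'.root]
    · rw [h.step u v huv, h'.step u v huv, ih _ (by simp [h.step u v huv]) u rfl]

/-- Distinct vertices have distinct codes: equal codes force equal colors and, inductively, equal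
parents, and siblings have distinct colors. -/
theorem injective (h : IsCode F code) : Function.Injective code := by
  intro v v' e
  induction hr : (code v).length using Nat.strong_induction_on generalizing v v' with
  | _ N ih =>
    subst hr
    have hcol : F.color v = F.color v' := by
      have := h.head? v
      rw [e, h.head? v'] at this
      simpa using this.symm
    rcases eq_root_or_exists_adj F v with rfl | ⟨u, huv⟩ <;>
      rcases eq_root_or_exists_adj F v' with rfl | ⟨u', huv'⟩
    · rfl
    · rw [h.root, h.step _ _ huv'] at e
      exact absurd (List.cons.inj e).2.symm (h.ne_nil u')
    · rw [h.root, h.step _ _ huv] at e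
      exact absurd (List.cons.inj e).2 (h.ne_nil u)
    · rw [h.step _ _ huv, h.step _ _ huv'] at e
      have hu := ih _ (by simp [h.step _ _ huv]) (List.cons.inj e).2 rfl
      subst hu
      exact F.color_inj u (by simp [huv]) (by simp [huv']) hcol

/-- The code determines the tree structure. -/
theorem adj_iff (h : IsCode F code) (u v : Fin n) :
    F.adj u v ↔ code v ∈ children (code u) := by
  rw [mem_children]
  constructor
  · intro huv
    exact ⟨F.color v, by simpa [h.head? u] using h.color_ne huv, h.step u v huv⟩
  · rintro ⟨a, -, e⟩
    rcases eq_root_or_exists_adj F v with rfl | ⟨x, hx⟩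
    · rw [h.root] at e
      exact absurd (List.cons.inj e).2.symm (h.ne_nil u)
    · rw [h.step x v hx] at e
      rwa [← h.injective (List.cons.inj e).2]

/-- The codes of a tree form a set of words growing out of the single slot `[color of the root]`. -/
theorem grows (h : IsCode F code) :
    Grows {[F.color (F.root 0)]} (Finset.univ.image code) := by
  intro s hs
  obtain ⟨v, -, rfl⟩ := Finset.mem_image.1 hs
  rcases eq_root_or_exists_adj F v with rfl | ⟨u, huv⟩
  · left; simp [h.root]
  · exact Or.inr ⟨code u, by simp, (h.adj_iff u v).1 huv⟩

theorem image_eq_of_iso (h : IsCode F code) (h' : IsCode G code') (e : F.Iso G) :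
    Finset.univ.image code = Finset.univ.image code' := by
  obtain ⟨e, hadj, hroot, hcol⟩ := e
  have : IsCode F (code' ∘ e) := by
    constructor
    · rw [Function.comp, hroot, h'.root, ← hroot, hcol]
    · intro u v huv
      rw [Function.comp, h'.step _ _ ((hadj u v).1 huv), hcol]
      rfl
  rw [h.unique this, ← Finset.image_image]
  simp

theorem iso_of_image_eq (h : IsCode F code) (h' : IsCode G code')
    (e : Finset.univ.image code = Finset.univ.image code') : F.Iso G := by
  have hex : ∀ v, ∃ w, code' w = code v := by
    intro v
    have : code v ∈ Finset.univ.image code' := e ▸ Finset.mem_image_of_mem _ (Finset.mem_univ v)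
    simpa using this
  choose f hf using hex
  have hinj : Function.Injective f := by
    intro v w hvw
    apply h.injective
    rw [← hf, ← hf, hvw]
  have hcol : ∀ v, G.color (f v) = F.color v := by
    intro v
    have := h'.head? (f v)
    rw [hf, h.head? v] at this
    simpa using this.symm
  refine ⟨Equiv.ofBijective f (Finite.injective_iff_bijective.1 hinj), ?_, ?_, hcol⟩
  · intro v w
    simp [h.adj_iff, h'.adj_iff, hf]
  · intro j
    obtain rfl : j = 0 := Subsingleton.elim _ _
    change f (F.root 0) = G.root 0
    -- a vertex whose code has length one cannot have a parent
    rcases eq_root_or_exists_adj G (f (F.root 0)) with h0 | ⟨u, hu⟩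
    · exact h0
    · have := h'.step _ _ hu
      rw [hf, h.root] at this
      exact absurd (List.cons.inj this).2.symm (h'.ne_nil u)

end IsCode

/-! ### From sets of words to trees -/

/-- Every nonempty finite set of words growing out of `[c]` is the set of codes of a tree, namely of
the set itself, with edges `w → a :: w` and each word colored by its first letter. -/
theorem exists_tree_of_grows {k n : ℕ} {c : Fin k} {S : Finset (List (Fin k))}
    (hS : Grows {[c]} S) (hcard : S.card = n) (hn : 1 ≤ n) :
    ∃ F : CForest k 1 n, F.color (F.root 0) = c ∧
      ∃ code, IsCode F code ∧ Finset.univ.image code = S := by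
  let e : Fin n ≃ S := (S.equivFinOfCardEq hcard).symm
  let w : Fin n → List (Fin k) := fun v => (e v).1
  have hwinj : Function.Injective w := Subtype.val_injective.comp e.injective
  have hwS : Finset.univ.image w = S := by
    ext s
    simp only [Finset.mem_image, Finset.mem_univ, true_and]
    exact ⟨fun ⟨v, hv⟩ => hv ▸ (e v).2, fun hs => ⟨e.symm ⟨s, hs⟩, by simp [w]⟩⟩
  have hmem : ∀ v, w v ∈ S := fun v => (e v).2
  have hsurj : ∀ s ∈ S, ∃ v, w v = s := fun s hs => ⟨e.symm ⟨s, hs⟩, by simp [w]⟩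
  have hcS : [c] ∈ S := by
    obtain ⟨s, hs⟩ := Finset.card_pos.1 (by omega : 0 < S.card)
    obtain ⟨x, hx, hxS, -⟩ := hS.exists_suffix s hs
    rwa [Finset.mem_singleton.1 hx] at hxS
  have hne : ∀ v, w v ≠ [] := by
    intro v hv
    obtain ⟨x, hx, -, hxs⟩ := hS.exists_suffix _ (hmem v)
    rw [Finset.mem_singleton.1 hx, hv] at hxs
    simpa using hxs.length_le
  obtain ⟨ρ, hρ⟩ := hsurj _ hcS
  have hhead : ∀ v a t, w v = a :: t → (w v).head (hne v) = a := by
    intro v a t h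
    simp [h]
  have hpath := existsUnique_path (adj := fun u v => w v ∈ children (w u)) (root := ρ)
    (fun v => (w v).length)
    (by
      intro u v h
      obtain ⟨a, -, h⟩ := mem_children.1 h
      simp [h])
    (by
      intro u u' v h h'
      obtain ⟨a, -, h⟩ := mem_children.1 h
      obtain ⟨a', -, h'⟩ := mem_children.1 h'
      exact hwinj (List.cons.inj (h.symm.trans h')).2)
    (by
      intro u h
      obtain ⟨a, -, h⟩ := mem_children.1 h
      rw [hρ] at h
      exact hne u (List.cons.inj h).2.symm)
    (by
      intro v
      rcases hS _ (hmem v) with h | ⟨t, ht, h⟩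
      · exact Or.inl (hwinj ((Finset.mem_singleton.1 h).trans hρ.symm))
      · obtain ⟨u, rfl⟩ := hsurj t ht
        exact Or.inr ⟨u, h⟩)
  let F : CForest k 1 n :=
    { adj := fun u v => w v ∈ children (w u)
      root := fun _ => ρ
      color := fun v => (w v).head (hne v)
      root_inj := Function.injective_of_subsingleton _
      path_unique := by
        intro v
        obtain ⟨p, ⟨hc, hh, hl⟩, hu⟩ := hpath v
        exact ⟨p, ⟨hc, ⟨0, hh⟩, hl⟩, fun q ⟨hc', ⟨_, hh'⟩, hl'⟩ => hu q ⟨hc', hh', hl'⟩⟩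
      color_inj := by
        intro v x hx y hy hxy
        change (w x).head (hne x) = (w y).head (hne y) at hxy
        simp only [Set.singleton_union, Set.mem_insert_iff, Set.mem_ofPred_eq,
          mem_children] at hx hy
        rcases hx with rfl | ⟨a, ha, hx⟩ <;> rcases hy with rfl | ⟨b, hb, hy⟩
        · rfl
        · rw [hhead _ _ _ hy] at hxy
          exact absurd (by rw [← hxy, List.head?_eq_some_head (hne x)]) hb
        · rw [hhead _ _ _ hx] at hxy
          exact absurd (by rw [hxy, List.head?_eq_some_head (hne y)]) ha
        · rw [hhead _ _ _ hx, hhead _ _ _ hy] at hxy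
          exact hwinj (by rw [hx, hy, hxy]) }
  have hroot : F.color (F.root 0) = c := hhead ρ c [] hρ
  refine ⟨F, hroot, w, ⟨?_, ?_⟩, hwS⟩
  · rw [hroot]; exact hρ
  · intro u v huv
    obtain ⟨a, -, h⟩ := mem_children.1 huv
    rw [h]
    congr 1
    exact (hhead v _ _ h).symm

/-! ### The count -/

/-- The set of codes is a complete isomorphism invariant, and its possible values are counted by
`encard_grows`. -/
theorem treeCountN_eq {k n : ℕ} (c : Fin k) (hn : 1 ≤ n) :
    treeCountN k n c = forestCount (k - 1) n 1 := by
  choose code hcode using fun F : CForest k 1 n => exists_isCode F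
  let Φ : Quot (fun F G : {F : CForest k 1 n // ∀ j : Fin 1, F.color (F.root j) = c} =>
      CForest.Iso F.1 G.1) → {S : Finset (List (Fin k)) | Grows {[c]} S ∧ S.card = n} :=
    Quot.lift
      (fun F => ⟨Finset.univ.image (code F.1), by
        have := (hcode F.1).grows
        rwa [F.2 0] at this, by
        rw [Finset.card_image_of_injective _ (hcode F.1).injective, Finset.card_fin]⟩)
      (fun F G h => Subtype.ext ((hcode F.1).image_eq_of_iso (hcode G.1) h))
  have hΦ : Function.Bijective Φ := by
    constructor
    · rintro ⟨F⟩ ⟨G⟩ h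
      exact Quot.sound ((hcode F.1).iso_of_image_eq (hcode G.1) (congrArg Subtype.val h))
    · rintro ⟨S, hS, hcard⟩
      obtain ⟨F, hF, code', hcode', himg⟩ := exists_tree_of_grows hS hcard hn
      refine ⟨Quot.mk _ ⟨F, fun j => by rw [Subsingleton.elim j 0, hF]⟩, Subtype.ext ?_⟩
      change Finset.univ.image (code F) = S
      rw [(hcode F).unique hcode', himg]
  rw [treeCountN, Nat.card_congr (Equiv.ofBijective Φ hΦ), Nat.card_coe_set_eq, Set.ncard,
    encard_grows n 1 {[c]} (by simp) (by simp) (by simp [IsAntichain]), ENat.toNat_natCast]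

theorem statement3 (k : ℕ) (hk : 1 ≤ k) (c : Fin k) (n : ℕ) (hn : 1 ≤ n) :
    (treeCountN k n c : ℚ)
        = (1 / ((k * n - n + 1 : ℕ) : ℚ)) * ((k * n - n + 1).choose n : ℚ) ∧
    (treeCountN k n c : ℚ) = fussCat n (k - 1) 1 := by
  have hsub : k * n - n + 1 = n * (k - 1) + 1 := by
    obtain ⟨m, rfl⟩ := Nat.exists_eq_add_of_le' hk
    rw [add_mul, one_mul, Nat.add_sub_cancel, Nat.add_sub_cancel, mul_comm]
  have hfuss : (treeCountN k n c : ℚ) = fussCat n (k - 1) 1 := by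
    have hne : ((n * (k - 1) + 1 : ℕ) : ℚ) ≠ 0 := by positivity
    rw [treeCountN_eq c hn, fussCat, div_mul_eq_mul_div, eq_div_iff hne, forestCount_mul]
  refine ⟨?_, hfuss⟩
  rw [hfuss, hsub, fussCat, Nat.cast_one]
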